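/- The space C^r(𝒪_F,E) is an E-Banach algebra: if f, g ∈ C^r(𝒪_F,E), then the pointwise product fg belongs to C^r(𝒪_F,E), with ‖fg‖_{C^r} ≤ ‖f‖_{C^r}·‖g‖_{C^r}, and for every k ∈ I_{≤[r]} one has D_k(fg) = Σ_{i+j=k} (k choose i) · D_i f · D_j g, where (k choose i) = k!/(i!·(k−i)!). -/

import Mathlib

/-!
Setting (cf. the paper's notations): `O` plays the role of the ring of integers `𝒪_F` of a
finite extension `F` of `ℚ_p`, `E` is the coefficient field (a finite extension of `ℚ_p`
with its p-adic absolute value, normalized by `|x| = p^{-val_F(x)}`, `val_F(p) = [F:ℚ_p]`),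
`S` is the (finite) set of `ℚ_p`-algebra embeddings `F ↪ E`, restricted here to `O`,
`ν : O → ℝ` is the absolute value on `O` (the common restriction of the norm of `E` along any
embedding), `ϖ` is a fixed uniformizer with `ν ϖ = q⁻¹` where `q = p^f` is the cardinality
of the residue field, and `u * ϖ ^ e = p` records the ramification index `e`.
-/

open scoped Classical

noncomputable section

namespace CrPaper

structure Setting (S O E : Type*) [Fintype S] [CommRing O] [NormedField E] where
  q : ℝ
  p : ℕ
  fdeg : ℕ
  hp : p.Prime
  hfdeg : 0 < fdeg
  hq : q = (p : ℝ) ^ fdeg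
  emb : S → O →+* E
  emb_inj : ∀ s, Function.Injective (emb s)
  emb_distinct : Function.Injective emb
  ν : O → ℝ
  norm_emb : ∀ (s) (z : O), ‖emb s z‖ = ν z
  norm_le_one : ∀ (s) (z : O), ‖emb s z‖ ≤ 1
  norm_add_max : ∀ x y : E, ‖x + y‖ ≤ max ‖x‖ ‖y‖
  ϖ : O
  ν_ϖ : ν ϖ = q⁻¹
  mem_ball_iff : ∀ (y : O) (n : ℕ), (∃ z, y = ϖ ^ n * z) ↔ ν y ≤ q⁻¹ ^ n
  ram : ∃ (e : ℕ) (u : O), 0 < e ∧ IsUnit u ∧ u * ϖ ^ e = (p : O)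

variable {S O E : Type*} [Fintype S] [DecidableEq S] [CommRing O] [IsDomain O]
  [NormedField E] [CompleteSpace E] [CharZero E]

/-- The total weight `|i| = ∑ i_σ` of a multi-index. -/
def wt (i : S → ℕ) : ℕ := ∑ s, i s

/-- `i! = ∏ i_σ!` for a multi-index. -/
def mfact (i : S → ℕ) : ℕ := ∏ s, (i s).factorial

/-- The (finite) set `I_{≤N}` of multi-indices of total weight `≤ N`. -/
def Idx (S : Type*) [Fintype S] [DecidableEq S] (N : ℕ) : Finset (S → ℕ) :=
  (Fintype.piFinset fun _ : S => Finset.range (N + 1)).filter fun i => wt i ≤ N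

/-- `z^i = ∏_σ σ(z)^{i_σ}`. -/
def mpow (St : Setting S O E) (z : O) (i : S → ℕ) : E := ∏ s, St.emb s z ^ i s

/-- The Taylor remainder `ε_{f,N}(x,y) = f(x+y) − ∑_{|i|≤N} D_i f(x) y^i / i!`. -/
def epsTay (St : Setting S O E) (N : ℕ) (f : O → E) (D : (S → ℕ) → O → E) (x y : O) : E :=
  f (x + y) - ∑ i ∈ Idx S N, D i x * mpow St y i / (mfact i : E)

/-- `f` is of class `C^r` with the family of bounded functions `D` witnessing the
definition: all `D_i` (`|i| ≤ ⌊r⌋`) are bounded and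
`C_{f,r}(h) = sup_{x ∈ O, y ∈ ϖ^h O} |ε_{f,⌊r⌋}(x,y)| q^{rh} → 0` as `h → ∞`. -/
def IsCrWith (St : Setting S O E) (r : ℝ) (f : O → E) (D : (S → ℕ) → O → E) : Prop :=
  (∀ i ∈ Idx S ⌊r⌋₊, ∃ C : ℝ, ∀ x : O, ‖D i x‖ ≤ C) ∧
  ∀ ε : ℝ, 0 < ε → ∃ M : ℕ, ∀ h : ℕ, M ≤ h → ∀ x z : O,
    ‖epsTay St ⌊r⌋₊ f D x (St.ϖ ^ h * z)‖ * St.q ^ (r * (h : ℝ)) ≤ ε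

/-- `f` is of class `C^r`. -/
def IsCr (St : Setting S O E) (r : ℝ) (f : O → E) : Prop :=
  ∃ D, IsCrWith St r f D

/-- The `C^r`-norm of `f` (relative to the — unique — family `D`):
`max( sup_{i,x} |D_i f(x)/i!| , sup_{x,y} |ε_{f,⌊r⌋}(x,y)|/|y|^r )`. -/
def CrNorm (St : Setting S O E) (r : ℝ) (f : O → E) (D : (S → ℕ) → O → E) : ℝ :=
  max (⨆ i : (Idx S ⌊r⌋₊), ⨆ x : O, ‖D i.1 x / (mfact i.1 : E)‖)
      (⨆ x : O, ⨆ y : O, ‖epsTay St ⌊r⌋₊ f D x y‖ / St.ν y ^ r)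

/-- The multinomial coefficient `(k choose i) = k!/(i!(k−i)!)`. -/
def mchoose (k i : S → ℕ) : ℕ := ∏ s, (k s).choose (i s)

section Helpers

set_option linter.unusedSectionVars false

theorem mem_Idx (N : ℕ) (i : S → ℕ) : i ∈ Idx S N ↔ wt i ≤ N := by
  unfold Idx
  rw [Finset.mem_filter, Fintype.mem_piFinset]
  constructor
  · exact fun h => h.2
  · intro h
    refine ⟨fun s => ?_, h⟩
    have : i s ≤ wt i := Finset.single_le_sum (f := i) (fun _ _ => Nat.zero_le _) (Finset.mem_univ s)
    rw [Finset.mem_range]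
    omega

theorem wt_add (i j : S → ℕ) : wt (i + j) = wt i + wt j := by
  simp [wt, Finset.sum_add_distrib]

theorem zero_mem_Idx (N : ℕ) : (0 : S → ℕ) ∈ Idx S N := by
  rw [mem_Idx]; simp [wt]

theorem mpow_add (St : Setting S O E) (z : O) (i j : S → ℕ) :
    mpow St z (i + j) = mpow St z i * mpow St z j := by
  simp [mpow, pow_add, Finset.prod_mul_distrib]

theorem norm_mpow (St : Setting S O E) (z : O) (i : S → ℕ) :
    ‖mpow St z i‖ = St.ν z ^ wt i := by
  simp [mpow, wt, St.norm_emb, Finset.prod_pow_eq_pow_sum]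

theorem norm_mpow_le_one (St : Setting S O E) (z : O) (i : S → ℕ) :
    ‖mpow St z i‖ ≤ 1 := by
  unfold mpow
  rw [norm_prod]
  refine Finset.prod_le_one (fun _ _ => norm_nonneg _) fun s _ => ?_
  rw [norm_pow]
  exact pow_le_one₀ (norm_nonneg _) (St.norm_le_one s z)

theorem one_lt_q (St : Setting S O E) : 1 < St.q := by
  rw [St.hq]
  exact one_lt_pow₀ (by exact_mod_cast St.hp.one_lt) St.hfdeg.ne'

theorem nu_le_one (St : Setting S O E) (y : O) : St.ν y ≤ 1 := by
  have := (St.mem_ball_iff y 0).1 ⟨y, by simp⟩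
  simpa using this

theorem norm_sum_le_c (St : Setting S O E) {ι : Type*} (s : Finset ι) (F : ι → E) (C : ℝ)
    (hC : 0 ≤ C) (h : ∀ i ∈ s, ‖F i‖ ≤ C) : ‖∑ i ∈ s, F i‖ ≤ C := by
  classical
  induction s using Finset.induction_on with
  | empty => simpa using hC
  | insert a s ha ih =>
    rw [Finset.sum_insert ha]
    refine (St.norm_add_max _ _).trans (max_le (h _ (Finset.mem_insert_self _ _)) ?_)
    exact ih fun i hi => h i (Finset.mem_insert_of_mem hi)

theorem mfact_ne (i : S → ℕ) : (mfact i : E) ≠ 0 := by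
  have : mfact i ≠ 0 := Finset.prod_ne_zero_iff.2 fun s _ => Nat.factorial_ne_zero _
  exact_mod_cast this

theorem mchoose_mul (i j : S → ℕ) : mchoose (i + j) i * mfact i * mfact j = mfact (i + j) := by
  simp only [mchoose, mfact, ← Finset.prod_mul_distrib]
  refine Finset.prod_congr rfl fun s _ => ?_
  have := Nat.choose_mul_factorial_mul_factorial (n := i s + j s) (k := i s) (Nat.le_add_right _ _)
  simpa using this

theorem leibniz_term (i j : S → ℕ) (a b : E) :
    (mchoose (i + j) i : E) * a * b / (mfact (i + j) : E)
      = a / (mfact i : E) * (b / (mfact j : E)) := by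
  have h : (mchoose (i + j) i : E) * mfact i * mfact j = mfact (i + j) := by
    exact_mod_cast congrArg (Nat.cast : ℕ → E) (mchoose_mul i j)
  have h1 := mfact_ne (E := E) i
  have h2 := mfact_ne (E := E) j
  have h3 := mfact_ne (E := E) (i + j)
  rw [div_mul_div_comm, div_eq_div_iff h3 (mul_ne_zero h1 h2), ← h]
  ring

/-- the remainder vanishes on the intersection of all the `ϖ^h O` -/
theorem eps_eq_zero (St : Setting S O E) (r : ℝ) (hr : 0 ≤ r) (f : O → E) (D : (S → ℕ) → O → E)
    (hf : IsCrWith St r f D) (x y : O) (hy : ∀ n : ℕ, ∃ z, y = St.ϖ ^ n * z) :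
    epsTay St ⌊r⌋₊ f D x y = 0 := by
  rw [← norm_le_zero_iff]
  refine le_of_forall_pos_le_add fun ε hε => ?_
  obtain ⟨M, hM⟩ := hf.2 ε hε
  obtain ⟨z, hz⟩ := hy M
  have h := hM M le_rfl x z
  rw [← hz] at h
  have hq : 1 ≤ St.q ^ (r * (M : ℝ)) :=
    Real.one_le_rpow (one_lt_q St).le (by positivity)
  have := le_mul_of_one_le_right (norm_nonneg (epsTay St ⌊r⌋₊ f D x y)) hq
  linarith

theorem eps_zero_of_nu (St : Setting S O E) (r : ℝ) (hr : 0 ≤ r) (f : O → E)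
    (D : (S → ℕ) → O → E)
    (hf : IsCrWith St r f D) (x y : O) (hy : St.ν y ≤ 0) :
    epsTay St ⌊r⌋₊ f D x y = 0 := by
  refine eps_eq_zero St r hr f D hf x y fun n => (St.mem_ball_iff y n).2 (hy.trans ?_)
  have := one_lt_q St
  positivity

theorem D_zero (St : Setting S O E) (r : ℝ) (hr : 0 ≤ r) (f : O → E) (D : (S → ℕ) → O → E)
    (hf : IsCrWith St r f D) (x : O) : f x = D 0 x := by
  have h := eps_eq_zero St r hr f D hf x 0 fun n => ⟨0, by simp⟩
  unfold epsTay at h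
  rw [Finset.sum_eq_single_of_mem 0 (zero_mem_Idx _)] at h
  · have := sub_eq_zero.1 h
    simpa [mpow, mfact] using this
  · intro i _ hi
    obtain ⟨s, hs⟩ := Function.ne_iff.1 hi
    have : mpow St (0 : O) i = 0 := by
      refine Finset.prod_eq_zero (Finset.mem_univ s) ?_
      rw [map_zero]; exact zero_pow hs
    simp [this]

theorem D_bdd (St : Setting S O E) (r : ℝ) (f : O → E) (D : (S → ℕ) → O → E)
    (hf : IsCrWith St r f D) :
    ∃ C : ℝ, 0 ≤ C ∧ ∀ i ∈ Idx S ⌊r⌋₊, ∀ x, ‖D i x / (mfact i : E)‖ ≤ C := by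
  choose! C hC using hf.1
  refine ⟨∑ i ∈ Idx S ⌊r⌋₊, |C i / ‖(mfact i : E)‖|,
    Finset.sum_nonneg fun _ _ => abs_nonneg _, fun i hi x => ?_⟩
  refine le_trans ?_ (Finset.single_le_sum (f := fun i => |C i / ‖(mfact i : E)‖|)
    (fun _ _ => abs_nonneg _) hi)
  refine le_trans ?_ (le_abs_self _)
  rw [norm_div]
  exact div_le_div_of_nonneg_right (hC i hi x) (norm_nonneg _)

theorem taylor_le (St : Setting S O E) (N : ℕ) (D : (S → ℕ) → O → E) (C : ℝ) (hC : 0 ≤ C)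
    (h : ∀ i ∈ Idx S N, ∀ x, ‖D i x / (mfact i : E)‖ ≤ C) (x y : O) :
    ‖∑ i ∈ Idx S N, D i x * mpow St y i / (mfact i : E)‖ ≤ C := by
  refine norm_sum_le_c St _ _ C hC fun i hi => ?_
  rw [mul_div_right_comm, norm_mul]
  exact (mul_le_of_le_one_right (norm_nonneg _) (norm_mpow_le_one St y i)).trans (h i hi x)

theorem norm_f_le (St : Setting S O E) (r : ℝ) (hr : 0 ≤ r) (f : O → E) (D : (S → ℕ) → O → E)
    (hf : IsCrWith St r f D) (C : ℝ)
    (h : ∀ i ∈ Idx S ⌊r⌋₊, ∀ x, ‖D i x / (mfact i : E)‖ ≤ C) (x : O) : ‖f x‖ ≤ C := by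
  have := h 0 (zero_mem_Idx _) x
  rw [D_zero St r hr f D hf x]
  simpa [mfact] using this

theorem eps_bdd (St : Setting S O E) (r : ℝ) (hr : 0 ≤ r) (f : O → E) (D : (S → ℕ) → O → E)
    (hf : IsCrWith St r f D) :
    ∃ C : ℝ, 0 ≤ C ∧ ∀ x y, ‖epsTay St ⌊r⌋₊ f D x y‖ / St.ν y ^ r ≤ C := by
  obtain ⟨C, hC, hD⟩ := D_bdd St r f D hf
  obtain ⟨M, hM⟩ := hf.2 1 one_pos
  have hq1 := one_lt_q St
  have hq0 : 0 < St.q := by linarith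
  have hepsC : ∀ x y, ‖epsTay St ⌊r⌋₊ f D x y‖ ≤ C := by
    intro x y
    unfold epsTay
    rw [sub_eq_add_neg]
    refine (St.norm_add_max _ _).trans (max_le (norm_f_le St r hr f D hf C hD _) ?_)
    rw [norm_neg]
    exact taylor_le St _ D C hC hD x y
  refine ⟨max (C * St.q ^ (r * (M : ℝ))) (St.q ^ r), le_max_of_le_right (by positivity),
    fun x y => ?_⟩
  by_cases hy : St.ν y ≤ 0
  · rw [eps_zero_of_nu St r hr f D hf x y hy]
    simp only [norm_zero, zero_div]
    exact le_max_of_le_right (by positivity)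
  push Not at hy
  have hpos : 0 < St.ν y ^ r := Real.rpow_pos_of_pos hy r
  have key : ∀ n : ℕ, St.q⁻¹ ^ n ≤ St.ν y → 1 ≤ St.q ^ (r * (n : ℝ)) * St.ν y ^ r := by
    intro n hn
    have h1 : (St.q⁻¹ ^ n) ^ r ≤ St.ν y ^ r := Real.rpow_le_rpow (by positivity) hn hr
    have h2 : St.q ^ (r * (n : ℝ)) * (St.q⁻¹ ^ n) ^ r = 1 := by
      rw [mul_comm r, Real.rpow_mul hq0.le, Real.rpow_natCast, ← Real.mul_rpow (by positivity)
        (by positivity), ← mul_pow, mul_inv_cancel₀ hq0.ne', one_pow, Real.one_rpow]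
    rw [← h2]
    gcongr
  by_cases hyM : St.q⁻¹ ^ M ≤ St.ν y
  · refine le_max_of_le_left ?_
    rw [div_le_iff₀ hpos, mul_assoc]
    exact (hepsC x y).trans (le_mul_of_one_le_right hC (key M hyM))
  · push Not at hyM
    obtain ⟨n, hn1, hn2⟩ := exists_nat_pow_near_of_lt_one (y := St.q⁻¹) hy (nu_le_one St y)
      (by positivity) (inv_lt_one_of_one_lt₀ hq1)
    have hMn : M ≤ n := by
      by_contra hlt
      push Not at hlt
      have : St.q⁻¹ ^ M ≤ St.q⁻¹ ^ (n + 1) :=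
        pow_le_pow_of_le_one (by positivity) (inv_le_one_of_one_le₀ hq1.le) hlt
      linarith
    obtain ⟨z, hz⟩ := (St.mem_ball_iff y n).2 hn2
    have h1 := hM n hMn x z
    rw [← hz] at h1
    have h2 := key (n + 1) hn1.le
    refine le_max_of_le_right ?_
    rw [div_le_iff₀ hpos]
    have e : St.q ^ (r * ((n + 1 : ℕ) : ℝ)) = St.q ^ (r * (n : ℝ)) * St.q ^ r := by
      rw [← Real.rpow_add hq0]; congr 1; push_cast; ring
    rw [e] at h2
    calc ‖epsTay St ⌊r⌋₊ f D x y‖ ≤ ‖epsTay St ⌊r⌋₊ f D x y‖ *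
          (St.q ^ (r * (n : ℝ)) * St.q ^ r * St.ν y ^ r) :=
          le_mul_of_one_le_right (norm_nonneg _) h2
      _ = (‖epsTay St ⌊r⌋₊ f D x y‖ * St.q ^ (r * (n : ℝ))) * (St.q ^ r * St.ν y ^ r) := by ring
      _ ≤ 1 * (St.q ^ r * St.ν y ^ r) := by gcongr
      _ = _ := one_mul _

theorem D_le_norm (St : Setting S O E) (r : ℝ) (f : O → E)
    (D : (S → ℕ) → O → E) (hf : IsCrWith St r f D) :
    ∀ i ∈ Idx S ⌊r⌋₊, ∀ x, ‖D i x / (mfact i : E)‖ ≤ CrNorm St r f D := by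
  intro i hi x
  obtain ⟨C, hC, hD⟩ := D_bdd St r f D hf
  refine le_trans ?_ (le_max_left _ _)
  have h1 : ‖D i x / (mfact i : E)‖ ≤ ⨆ x : O, ‖D i x / (mfact i : E)‖ :=
    le_ciSup (f := fun x : O => ‖D i x / (mfact i : E)‖)
      ⟨C, by rintro _ ⟨x, rfl⟩; exact hD i hi x⟩ x
  refine h1.trans ?_
  refine le_ciSup (f := fun i : (Idx S ⌊r⌋₊) => ⨆ x : O, ‖D i.1 x / (mfact i.1 : E)‖)
      ⟨C, ?_⟩ ⟨i, hi⟩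
  rintro _ ⟨i, rfl⟩
  exact ciSup_le fun x => hD i.1 i.2 x

theorem eps_le_norm (St : Setting S O E) (r : ℝ) (hr : 0 ≤ r) (f : O → E)
    (D : (S → ℕ) → O → E) (hf : IsCrWith St r f D) (x y : O) :
    ‖epsTay St ⌊r⌋₊ f D x y‖ / St.ν y ^ r ≤ CrNorm St r f D := by
  obtain ⟨C, hC, hD⟩ := eps_bdd St r hr f D hf
  refine le_trans ?_ (le_max_right _ _)
  refine le_trans (le_ciSup (f := fun y : O => ‖epsTay St ⌊r⌋₊ f D x y‖ / St.ν y ^ r)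
      ⟨C, by rintro _ ⟨y, rfl⟩; exact hD x y⟩ y) ?_
  refine le_ciSup (f := fun x : O => ⨆ y : O, ‖epsTay St ⌊r⌋₊ f D x y‖ / St.ν y ^ r)
      ⟨C, ?_⟩ x
  rintro _ ⟨x, rfl⟩
  exact ciSup_le fun y => hD x y

/-- the Leibniz family -/
def leib (Df Dg : (S → ℕ) → O → E) (k : S → ℕ) (x : O) : E :=
  ∑ i ∈ Finset.Iic k, (mchoose k i : E) * Df i x * Dg (k - i) x

theorem leib_div (Df Dg : (S → ℕ) → O → E) (k : S → ℕ) (x : O) :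
    leib Df Dg k x / (mfact k : E) = ∑ i ∈ Finset.Iic k,
      Df i x / (mfact i : E) * (Dg (k - i) x / (mfact (k - i) : E)) := by
  unfold leib
  rw [Finset.sum_div]
  refine Finset.sum_congr rfl fun i hi => ?_
  have hk : i + (k - i) = k := add_tsub_cancel_of_le (Finset.mem_Iic.1 hi)
  have := leibniz_term i (k - i) (Df i x) (Dg (k - i) x)
  rwa [hk] at this

theorem leib_sum (St : Setting S O E) (N : ℕ) (Df Dg : (S → ℕ) → O → E) (x y : O) :
    ∑ k ∈ Idx S N, leib Df Dg k x * mpow St y k / (mfact k : E) =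
      ∑ ij ∈ (Idx S N ×ˢ Idx S N).filter (fun ij => wt (ij.1 + ij.2) ≤ N),
        (Df ij.1 x * mpow St y ij.1 / (mfact ij.1 : E)) *
          (Dg ij.2 x * mpow St y ij.2 / (mfact ij.2 : E)) := by
  have : ∀ k ∈ Idx S N, leib Df Dg k x * mpow St y k / (mfact k : E) =
      ∑ i ∈ Finset.Iic k, (Df i x * mpow St y i / (mfact i : E)) *
          (Dg (k - i) x * mpow St y (k - i) / (mfact (k - i) : E)) := by
    intro k _
    rw [mul_div_right_comm, leib_div, Finset.sum_mul]
    refine Finset.sum_congr rfl fun i hi => ?_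
    have hk : i + (k - i) = k := add_tsub_cancel_of_le (Finset.mem_Iic.1 hi)
    have h2 : mpow St y k = mpow St y i * mpow St y (k - i) := by rw [← mpow_add, hk]
    rw [h2]
    ring
  rw [Finset.sum_congr rfl this, Finset.sum_sigma']
  refine Finset.sum_bij' (fun a _ => (a.2, a.1 - a.2)) (fun a _ => ⟨a.1 + a.2, a.1⟩) ?_ ?_ ?_ ?_ ?_
  · rintro ⟨k, i⟩ h
    simp only [Finset.mem_sigma, Finset.mem_Iic] at h
    have hk : i + (k - i) = k := add_tsub_cancel_of_le h.2
    have h3 := wt_add i (k - i)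
    rw [hk] at h3
    have h1 := (mem_Idx N k).1 h.1
    simp only [Finset.mem_filter, Finset.mem_product, mem_Idx, hk]
    omega
  · rintro ⟨i, j⟩ h
    simp only [Finset.mem_filter] at h
    simp only [Finset.mem_sigma, Finset.mem_Iic, mem_Idx]
    exact ⟨h.2, le_self_add⟩
  · rintro ⟨k, i⟩ h
    simp only [Finset.mem_sigma, Finset.mem_Iic] at h
    have hk : i + (k - i) = k := add_tsub_cancel_of_le h.2
    simp [hk]
  · rintro ⟨i, j⟩ h
    simp
  · rintro ⟨k, i⟩ h
    rfl

theorem eps_mul (St : Setting S O E) (N : ℕ) (f g : O → E) (Df Dg : (S → ℕ) → O → E) (x y : O) :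
    epsTay St N (fun z => f z * g z) (leib Df Dg) x y =
      epsTay St N f Df x y * g (x + y) +
      ((∑ i ∈ Idx S N, Df i x * mpow St y i / (mfact i : E)) * epsTay St N g Dg x y +
      ∑ ij ∈ (Idx S N ×ˢ Idx S N).filter (fun ij => ¬ wt (ij.1 + ij.2) ≤ N),
        (Df ij.1 x * mpow St y ij.1 / (mfact ij.1 : E)) *
          (Dg ij.2 x * mpow St y ij.2 / (mfact ij.2 : E))) := by
  have h := Finset.sum_filter_add_sum_filter_not (Idx S N ×ˢ Idx S N)
    (fun ij => wt (ij.1 + ij.2) ≤ N) (fun ij =>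
        (Df ij.1 x * mpow St y ij.1 / (mfact ij.1 : E)) *
          (Dg ij.2 x * mpow St y ij.2 / (mfact ij.2 : E)))
  rw [← leib_sum, Finset.sum_product] at h
  dsimp only at h
  rw [← Finset.sum_mul_sum] at h
  unfold epsTay
  linear_combination (-1 : E) * h

/-- bound for the cross terms -/
theorem cross_le (St : Setting S O E) (N : ℕ) (Df Dg : (S → ℕ) → O → E) (A B : ℝ)
    (hA : 0 ≤ A) (hB : 0 ≤ B)
    (hDf : ∀ i ∈ Idx S N, ∀ x, ‖Df i x / (mfact i : E)‖ ≤ A)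
    (hDg : ∀ i ∈ Idx S N, ∀ x, ‖Dg i x / (mfact i : E)‖ ≤ B) (x y : O) (t : ℝ)
    (ht0 : 0 ≤ t) (ht1 : t ≤ 1) (hy : St.ν y ≤ t) :
    ‖∑ ij ∈ (Idx S N ×ˢ Idx S N).filter (fun ij => ¬ wt (ij.1 + ij.2) ≤ N),
        (Df ij.1 x * mpow St y ij.1 / (mfact ij.1 : E)) *
          (Dg ij.2 x * mpow St y ij.2 / (mfact ij.2 : E))‖ ≤ A * B * t ^ (N + 1) := by
  refine norm_sum_le_c St _ _ _ (by positivity) ?_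
  rintro ⟨i, j⟩ h
  simp only [Finset.mem_filter, Finset.mem_product, not_le] at h
  obtain ⟨⟨hi, hj⟩, hw⟩ := h
  have e : (Df i x * mpow St y i / (mfact i : E)) * (Dg j x * mpow St y j / (mfact j : E)) =
      (Df i x / (mfact i : E)) * (Dg j x / (mfact j : E)) * mpow St y (i + j) := by
    rw [mpow_add]; ring
  simp only [e]
  rw [norm_mul, norm_mul]
  have hm : ‖mpow St y (i + j)‖ ≤ t ^ (N + 1) := by
    refine le_trans ?_ (pow_le_pow_of_le_one ht0 ht1 (Nat.succ_le_of_lt hw))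
    unfold mpow wt
    rw [norm_prod, ← Finset.prod_pow_eq_pow_sum]
    refine Finset.prod_le_prod (fun _ _ => norm_nonneg _) fun s _ => ?_
    rw [norm_pow]
    exact pow_le_pow_left₀ (norm_nonneg _) ((St.norm_emb s y).trans_le hy) _
  have := hDf i hi x
  have := hDg j hj x
  gcongr

end Helpers

/-- `C^r(O,E)` is an `E`-Banach algebra: `fg ∈ C^r`, with
`‖fg‖_{C^r} ≤ ‖f‖_{C^r} ‖g‖_{C^r}` and `D_k(fg) = ∑_{i+j=k} (k choose i) D_i f · D_j g`. -/
theorem statement6 (St : Setting S O E) (r : ℝ) (hr : 0 ≤ r)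
    (f g : O → E) (Df Dg : (S → ℕ) → O → E)
    (hf : IsCrWith St r f Df) (hg : IsCrWith St r g Dg) :
    ∃ Dfg : (S → ℕ) → O → E,
      IsCrWith St r (fun z => f z * g z) Dfg ∧
      CrNorm St r (fun z => f z * g z) Dfg ≤ CrNorm St r f Df * CrNorm St r g Dg ∧
      ∀ k ∈ Idx S ⌊r⌋₊, ∀ x : O,
        Dfg k x = ∑ i ∈ Finset.Iic k, (mchoose k i : E) * Df i x * Dg (k - i) x := by
  have hAD := D_le_norm St r f Df hf
  have hBD := D_le_norm St r g Dg hg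
  have hAe := eps_le_norm St r hr f Df hf
  have hBe := eps_le_norm St r hr g Dg hg
  set A := CrNorm St r f Df with hAdef
  set B := CrNorm St r g Dg with hBdef
  have hA : 0 ≤ A := (norm_nonneg _).trans (hAD 0 (zero_mem_Idx _) 0)
  have hB : 0 ≤ B := (norm_nonneg _).trans (hBD 0 (zero_mem_Idx _) 0)
  have hq1 := one_lt_q St
  have hq0 : 0 < St.q := by linarith
  have hleib : ∀ k ∈ Idx S ⌊r⌋₊, ∀ x, ‖leib Df Dg k x / (mfact k : E)‖ ≤ A * B := by
    intro k hk x
    rw [leib_div]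
    refine norm_sum_le_c St _ _ _ (by positivity) fun i hi => ?_
    have hik : i + (k - i) = k := add_tsub_cancel_of_le (Finset.mem_Iic.1 hi)
    have h3 := wt_add i (k - i)
    rw [hik] at h3
    have h1 := (mem_Idx _ k).1 hk
    have h4 := hAD i ((mem_Idx _ i).2 (by omega)) x
    have h5 := hBD (k - i) ((mem_Idx _ _).2 (by omega)) x
    rw [norm_mul]
    gcongr
  have hT := fun x y => taylor_le St ⌊r⌋₊ Df A hA hAD x y
  have hG := norm_f_le St r hr g Dg hg B hBD
  have hlt : r < (⌊r⌋₊ : ℝ) + 1 := Nat.lt_floor_add_one r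
  refine ⟨leib Df Dg, ⟨?_, ?_⟩, ?_, fun k _ x => rfl⟩
  · intro k hk
    refine ⟨A * B * ‖(mfact k : E)‖, fun x => ?_⟩
    have h := hleib k hk x
    have h0 : 0 < ‖(mfact k : E)‖ := norm_pos_iff.2 (mfact_ne k)
    rwa [norm_div, div_le_iff₀ h0] at h
  · intro ε hε
    obtain ⟨M1, hM1⟩ := hf.2 (ε / (B + 1)) (by positivity)
    obtain ⟨M2, hM2⟩ := hg.2 (ε / (A + 1)) (by positivity)
    have hs1 : St.q ^ (r - ((⌊r⌋₊ : ℝ) + 1)) < 1 :=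
      Real.rpow_lt_one_of_one_lt_of_neg hq1 (by linarith)
    obtain ⟨M3, hM3⟩ := exists_pow_lt_of_lt_one (show 0 < ε / (A * B + 1) by positivity) hs1
    refine ⟨max M1 (max M2 M3), fun h hh x z => ?_⟩
    have hh1 : M1 ≤ h := (le_max_left _ _).trans hh
    have hh2 : M2 ≤ h := ((le_max_left _ _).trans (le_max_right _ _)).trans hh
    have hh3 : M3 ≤ h := ((le_max_right _ _).trans (le_max_right _ _)).trans hh
    have e1 := hM1 h hh1 x z
    have e2 := hM2 h hh2 x z
    have hν := (St.mem_ball_iff (St.ϖ ^ h * z) h).1 ⟨z, rfl⟩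
    set y := St.ϖ ^ h * z with hy
    have hQ : 0 < St.q ^ (r * (h : ℝ)) := by positivity
    have hi1 : St.q⁻¹ ≤ 1 := inv_le_one_of_one_le₀ hq1.le
    have e3 := cross_le St ⌊r⌋₊ Df Dg A B hA hB hAD hBD x y (St.q⁻¹ ^ h) (by positivity)
      (pow_le_one₀ (by positivity) hi1) hν
    rw [← le_div_iff₀ hQ, eps_mul]
    refine (St.norm_add_max _ _).trans (max_le ?_ ((St.norm_add_max _ _).trans (max_le ?_ ?_)))
    · rw [norm_mul, le_div_iff₀ hQ]
      calc _ = (‖epsTay St ⌊r⌋₊ f Df x y‖ * St.q ^ (r * (h : ℝ))) * ‖g (x + y)‖ := by ring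
        _ ≤ ε / (B + 1) * (B + 1) := by
          gcongr
          linarith [hG (x + y)]
        _ = ε := by field_simp
    · rw [norm_mul, le_div_iff₀ hQ, mul_assoc]
      calc _ ≤ (A + 1) * (ε / (A + 1)) := by
            gcongr
            linarith [hT x y]
        _ = ε := by field_simp
    · refine e3.trans ?_
      rw [le_div_iff₀ hQ, mul_assoc]
      have e4 : (St.q⁻¹ ^ h) ^ (⌊r⌋₊ + 1) * St.q ^ (r * (h : ℝ)) =
          (St.q ^ (r - ((⌊r⌋₊ : ℝ) + 1))) ^ h := by
        rw [← Real.rpow_natCast (St.q ^ (r - ((⌊r⌋₊ : ℝ) + 1))), ← Real.rpow_mul hq0.le,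
          sub_mul, Real.rpow_sub hq0, inv_pow, inv_pow, ← pow_mul, ← Real.rpow_natCast]
        push_cast
        rw [mul_comm (h : ℝ), div_eq_mul_inv, mul_comm]
      rw [e4]
      have e5 : (St.q ^ (r - ((⌊r⌋₊ : ℝ) + 1))) ^ h ≤ ε / (A * B + 1) :=
        (pow_le_pow_of_le_one (by positivity) hs1.le hh3).trans hM3.le
      calc _ ≤ (A * B + 1) * (ε / (A * B + 1)) := by
            gcongr
            linarith
        _ = ε := by field_simp
  · have hne : Nonempty (Idx S ⌊r⌋₊) := ⟨⟨0, zero_mem_Idx _⟩⟩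
    refine max_le (ciSup_le fun i => ciSup_le fun x => hleib i.1 i.2 x)
      (ciSup_le fun x => ciSup_le fun y => ?_)
    by_cases hy : St.ν y ≤ 0
    · have e3 := cross_le St ⌊r⌋₊ Df Dg A B hA hB hAD hBD x y 0 le_rfl zero_le_one hy
      have e : epsTay St ⌊r⌋₊ (fun z => f z * g z) (leib Df Dg) x y = 0 := by
        rw [zero_pow (Nat.succ_ne_zero _), mul_zero, norm_le_zero_iff] at e3
        rw [eps_mul, eps_zero_of_nu St r hr f Df hf x y hy, eps_zero_of_nu St r hr g Dg hg x y hy,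
          e3]
        ring
      rw [e, norm_zero, zero_div]
      positivity
    push Not at hy
    have hpos : 0 < St.ν y ^ r := Real.rpow_pos_of_pos hy r
    have e1 := (div_le_iff₀ hpos).1 (hAe x y)
    have e2 := (div_le_iff₀ hpos).1 (hBe x y)
    have e3 := cross_le St ⌊r⌋₊ Df Dg A B hA hB hAD hBD x y _ hy.le (nu_le_one St y) le_rfl
    rw [div_le_iff₀ hpos, eps_mul]
    refine (St.norm_add_max _ _).trans (max_le ?_ ((St.norm_add_max _ _).trans (max_le ?_ ?_)))
    · rw [norm_mul]
      calc _ ≤ (A * St.ν y ^ r) * B := by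
            gcongr
            exact hG _
        _ = _ := by ring
    · rw [norm_mul, mul_assoc]
      gcongr
      exact hT x y
    · refine e3.trans ?_
      have : St.ν y ^ (⌊r⌋₊ + 1) ≤ St.ν y ^ r := by
        rw [← Real.rpow_natCast]
        refine Real.rpow_le_rpow_of_exponent_ge hy (nu_le_one St y) ?_
        push_cast
        exact hlt.le
      gcongr

end CrPaper
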